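/- Let w be a non-elliptic ε-web and G a minimal admissible red graph for w. If G is endowed with a fitting orientation, then it is strongly connected: for any two vertices v₁, v₂ of G there is an oriented path from v₁ to v₂. -/

import Mathlib

/-- Combinatorial model of an `ε`-web: regions (connected components of the complement in the
upper half-plane), edges (each adjacent to two regions, i.e. the data of the dual graph `D(w)`),
which regions are faces (bounded regions), which are disks, which triples of regions share a
vertex of the web, and the number of vertexless circles. -/
structure EpsilonWeb where
  /-- the boundary sequence of signs `ε` -/
  boundary : List Bool
  Region : Type
  Edge : Type
  [fintypeRegion : Fintype Region]
  [fintypeEdge : Fintype Edge]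
  [decEqRegion : DecidableEq Region]
  /-- the two regions adjacent to an edge of the web -/
  ends : Edge → Region × Region
  /-- `IsFace f` : the region `f` is a face (a bounded region not touching the boundary line) -/
  IsFace : Region → Prop
  /-- `IsDisk f` : the region `f` is diffeomorphic to a disk -/
  IsDisk : Region → Prop
  /-- `ShareVertex f₁ f₂ f₃` : the three regions share a vertex of the web -/
  ShareVertex : Region → Region → Region → Prop
  /-- number of vertexless circles of the web -/
  circles : ℕ

attribute [instance] EpsilonWeb.fintypeRegion EpsilonWeb.fintypeEdge EpsilonWeb.decEqRegion

namespace EpsilonWeb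

variable (w : EpsilonWeb)

/-- The degree of a region in the dual graph `D(w)`, i.e. its number of sides. -/
def degD (f : w.Region) : ℕ :=
  (Finset.univ.filter fun e : w.Edge => (w.ends e).1 = f).card +
  (Finset.univ.filter fun e : w.Edge => (w.ends e).2 = f).card

/-- A web is non-elliptic if it contains no vertexless circle, no digon and no square,
i.e. every face has at least 6 sides. -/
def NonElliptic : Prop := w.circles = 0 ∧ ∀ f : w.Region, w.IsFace f → 6 ≤ w.degD f

/-- The head of an edge with respect to an orientation `o`. -/
def head (o : w.Edge → Bool) (e : w.Edge) : w.Region :=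
  if o e then (w.ends e).2 else (w.ends e).1

/-- The tail of an edge with respect to an orientation `o`. -/
def tail (o : w.Edge → Bool) (e : w.Edge) : w.Region :=
  if o e then (w.ends e).1 else (w.ends e).2

end EpsilonWeb

/-- A red graph for a web `w` : a non-empty induced subgraph of the dual graph `D(w)` whose
vertices are faces diffeomorphic to disks, no three of which share a vertex of `w`. -/
structure RedGraph (w : EpsilonWeb) where
  verts : Finset w.Region
  nonempty : verts.Nonempty
  disks : ∀ f ∈ verts, w.IsFace f ∧ w.IsDisk f
  noTriple : ∀ f₁ f₂ f₃ : w.Region, w.ShareVertex f₁ f₂ f₃ →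
    ¬(f₁ ∈ verts ∧ f₂ ∈ verts ∧ f₃ ∈ verts)

namespace RedGraph

variable {w : EpsilonWeb} (G : RedGraph w)

/-- The edges of the red graph `G` : being an induced subgraph of `D(w)`, these are all edges of
`D(w)` with both endpoints in `V(G)`. -/
def edges : Finset w.Edge :=
  Finset.univ.filter fun e => (w.ends e).1 ∈ G.verts ∧ (w.ends e).2 ∈ G.verts

/-- The degree of a vertex in the red graph `G`. -/
def degG (f : w.Region) : ℕ :=
  (G.edges.filter fun e => (w.ends e).1 = f).card +
  (G.edges.filter fun e => (w.ends e).2 = f).card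

/-- The external degree `ed(f) = deg_{D(w)}(f) - 2 deg_G(f)`. -/
def extDeg (f : w.Region) : ℤ := (w.degD f : ℤ) - 2 * (G.degG f : ℤ)

/-- The level `i_o(f) = 2 - ed(f)/2 - #{edges of G pointing to f}` of a vertex `f` of `G`
with respect to an orientation `o`. -/
def level (o : w.Edge → Bool) (f : w.Region) : ℤ :=
  2 - G.extDeg f / 2 - ((G.edges.filter fun e => w.head o e = f).card : ℤ)

/-- An orientation is fitting if every vertex has non-negative level. -/
def Fitting (o : w.Edge → Bool) : Prop := ∀ f ∈ G.verts, 0 ≤ G.level o f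

/-- A red graph is admissible if it has a fitting orientation. -/
def Admissible : Prop := ∃ o : w.Edge → Bool, G.Fitting o

/-- The level `I(G)` of the red graph `G` (sum of the levels of its vertices; this quantity
is independent of the orientation: `I(G) = Σ_f (2 - ed(f)/2) - #E(G)`). -/
def ilevel : ℤ := (∑ f ∈ G.verts, (2 - G.extDeg f / 2)) - (G.edges.card : ℤ)

/-- An admissible red graph is exact if its level is 0. -/
def Exact : Prop := G.Admissible ∧ G.ilevel = 0

/-- A red graph is fair if every vertex has external degree at most 4. -/
def Fair : Prop := ∀ f ∈ G.verts, G.extDeg f ≤ 4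

/-- A red graph is nice if every vertex has external degree at most 2. -/
def Nice : Prop := ∀ f ∈ G.verts, G.extDeg f ≤ 2

/-- A minimal admissible red graph: an admissible red graph whose only admissible red
subgraph (admissible red graph with vertex set contained in `V(G)`) is itself. -/
def Minimal : Prop :=
  G.Admissible ∧ ∀ G' : RedGraph w, G'.Admissible → G'.verts ⊆ G.verts → G'.verts = G.verts

/-- Unoriented adjacency in the red graph. -/
def Adj (f g : w.Region) : Prop :=
  ∃ e ∈ G.edges, w.ends e = (f, g) ∨ w.ends e = (g, f)

/-- The red graph is connected. -/
def Connected : Prop :=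
  ∀ f ∈ G.verts, ∀ g ∈ G.verts, Relation.ReflTransGen G.Adj f g

/-- The red graph is a tree : connected and `#E + 1 = #V`. -/
def IsTree : Prop := G.Connected ∧ G.edges.card + 1 = G.verts.card

/-- Oriented adjacency with respect to an orientation `o`. -/
def OAdj (o : w.Edge → Bool) (f g : w.Region) : Prop :=
  ∃ e ∈ G.edges, w.tail o e = f ∧ w.head o e = g

/-- Strong connectivity: any vertex can be reached from any other by an oriented path. -/
def StronglyConnected (o : w.Edge → Bool) : Prop :=
  ∀ f ∈ G.verts, ∀ g ∈ G.verts, Relation.ReflTransGen (G.OAdj o) f g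

/-- A simple (unoriented) cycle with `k` vertices in the red graph: `k` pairwise distinct
vertices joined cyclically by `k` pairwise distinct edges. -/
def IsSimpleCycle (k : ℕ) : Prop :=
  ∃ (v : ZMod k → w.Region) (e : ZMod k → w.Edge),
    Function.Injective v ∧ Function.Injective e ∧
    ∀ i : ZMod k, e i ∈ G.edges ∧
      (w.ends (e i) = (v i, v (i + 1)) ∨ w.ends (e i) = (v (i + 1), v i))

end RedGraph

/-!
Since every edge of `G` at `f` points either into or out of `f`, the level can be rewritten as
`i_o(f) = 2 - deg_{D(w)}(f) / 2 + #{edges leaving f}`. Passing to a vertex subset that no oriented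
edge leaves therefore preserves levels, so it preserves fitting orientations, and minimality forces
every such non-empty subset to be all of `V(G)`. Apply this to the set of vertices reachable from
`v₁`.
-/

namespace RedGraph

variable {w : EpsilonWeb} {G H : RedGraph w} {o : w.Edge → Bool} {s : Finset w.Region}

/-- The in-degree of `f` in `G`: the number of edges of `G` pointing to `f`. -/
def inDeg (G : RedGraph w) (o : w.Edge → Bool) (f : w.Region) : ℕ :=
  (G.edges.filter fun e => w.head o e = f).card

/-- The out-degree of `f` in `G`: the number of edges of `G` leaving `f`. -/
def outDeg (G : RedGraph w) (o : w.Edge → Bool) (f : w.Region) : ℕ :=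
  (G.edges.filter fun e => w.tail o e = f).card

/-- A set `s` of regions is out-closed in `G` if no oriented edge of `G` leaves it. It need not be
contained in `V(G)`. -/
def OutClosed (G : RedGraph w) (o : w.Edge → Bool) (s : Finset w.Region) : Prop :=
  ∀ ⦃f g⦄, f ∈ s → G.OAdj o f g → g ∈ s

/-- The red graph induced by `G` on a non-empty subset of its vertices. -/
def induce (G : RedGraph w) (s : Finset w.Region) (hs : s.Nonempty) (hsG : s ⊆ G.verts) :
    RedGraph w where
  verts := s
  nonempty := hs
  disks f hf := G.disks f (hsG hf)
  noTriple f₁ f₂ f₃ hshare hmem :=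
    G.noTriple f₁ f₂ f₃ hshare ⟨hsG hmem.1, hsG hmem.2.1, hsG hmem.2.2⟩

theorem mem_edges_iff_tail_mem_and_head_mem (o : w.Edge → Bool) {e : w.Edge} :
    e ∈ G.edges ↔ w.tail o e ∈ G.verts ∧ w.head o e ∈ G.verts := by
  cases h : o e <;> simp [edges, EpsilonWeb.tail, EpsilonWeb.head, h, and_comm]

theorem edges_subset_edges (hHG : H.verts ⊆ G.verts) : H.edges ⊆ G.edges :=
  Finset.monotone_filter_right _ fun _ _ he => ⟨hHG he.1, hHG he.2⟩

theorem degG_eq_inDeg_add_outDeg (G : RedGraph w) (o : w.Edge → Bool) (f : w.Region) :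
    G.degG f = G.inDeg o f + G.outDeg o f := by
  simp only [degG, inDeg, outDeg, Finset.card_filter, ← Finset.sum_add_distrib]
  refine Finset.sum_congr rfl fun e _ => ?_
  cases h : o e <;> simp [EpsilonWeb.tail, EpsilonWeb.head, h, add_comm]

theorem level_eq_two_sub_degD_div_two_add_outDeg (G : RedGraph w) (o : w.Edge → Bool)
    (f : w.Region) : G.level o f = 2 - (w.degD f : ℤ) / 2 + G.outDeg o f := by
  have hlevel : G.level o f = 2 - (w.degD f - 2 * G.degG f : ℤ) / 2 - G.inDeg o f := rfl
  have hdeg := G.degG_eq_inDeg_add_outDeg o f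
  omega

theorem OutClosed.outDeg_eq (hH : G.OutClosed o H.verts) (hHG : H.verts ⊆ G.verts)
    {f : w.Region} (hf : f ∈ H.verts) : H.outDeg o f = G.outDeg o f := by
  refine congrArg Finset.card (Finset.Subset.antisymm
    (Finset.filter_subset_filter _ (edges_subset_edges hHG)) fun e he => ?_)
  obtain ⟨heG, rfl⟩ := Finset.mem_filter.1 he
  have head_mem : w.head o e ∈ H.verts := hH hf ⟨e, heG, rfl, rfl⟩
  exact Finset.mem_filter.2 ⟨(mem_edges_iff_tail_mem_and_head_mem o).2 ⟨hf, head_mem⟩, rfl⟩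

theorem OutClosed.level_eq (hH : G.OutClosed o H.verts) (hHG : H.verts ⊆ G.verts)
    {f : w.Region} (hf : f ∈ H.verts) : H.level o f = G.level o f := by
  rw [level_eq_two_sub_degD_div_two_add_outDeg, level_eq_two_sub_degD_div_two_add_outDeg,
    hH.outDeg_eq hHG hf]

theorem Fitting.of_outClosed (ho : G.Fitting o) (hH : G.OutClosed o H.verts)
    (hHG : H.verts ⊆ G.verts) : H.Fitting o := fun f hf =>
  (ho f (hHG hf)).trans_eq (hH.level_eq hHG hf).symm

theorem Minimal.eq_verts_of_outClosed (hG : G.Minimal) (ho : G.Fitting o) (hs : s.Nonempty)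
    (hsG : s ⊆ G.verts) (hclosed : G.OutClosed o s) : s = G.verts :=
  hG.2 (G.induce s hs hsG) ⟨o, ho.of_outClosed hclosed hsG⟩ hsG

theorem outClosed_filter_reflTransGen (G : RedGraph w) (o : w.Edge → Bool) (f : w.Region)
    [DecidablePred (Relation.ReflTransGen (G.OAdj o) f)] :
    G.OutClosed o (G.verts.filter (Relation.ReflTransGen (G.OAdj o) f)) := by
  rintro _ _ hreach ⟨e, he, rfl, rfl⟩
  exact Finset.mem_filter.2 ⟨((mem_edges_iff_tail_mem_and_head_mem o).1 he).2,
    (Finset.mem_filter.1 hreach).2.tail ⟨e, he, rfl, rfl⟩⟩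

end RedGraph

theorem minimal_red_graph_strongly_connected_general {w : EpsilonWeb} {G : RedGraph w}
    (hG : G.Minimal) {o : w.Edge → Bool} (ho : G.Fitting o) : G.StronglyConnected o := by
  classical
  intro f hf g hg
  have hreach : G.verts.filter (Relation.ReflTransGen (G.OAdj o) f) = G.verts :=
    hG.eq_verts_of_outClosed ho ⟨f, Finset.mem_filter.2 ⟨hf, .refl⟩⟩ (Finset.filter_subset _ _)
      (G.outClosed_filter_reflTransGen o f)
  exact Finset.filter_eq_self.1 hreach g hg

/-- Let `w` be a non-elliptic `ε`-web and `G` a minimal admissible red graph for `w`.  If `G` is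
endowed with a fitting orientation, then it is strongly connected: for any two vertices `v₁`,
`v₂` of `G` there is an oriented path from `v₁` to `v₂`. -/
theorem minimal_red_graph_strongly_connected (w : EpsilonWeb) (hw : w.NonElliptic)
    (G : RedGraph w) (hG : G.Minimal) (o : w.Edge → Bool) (ho : G.Fitting o) :
    G.StronglyConnected o :=
  minimal_red_graph_strongly_connected_general hG ho
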